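/- The representation W is irreducible — that is, the only invariant subspaces of W are {0} and W — if and only if m13 + m33 + 1 ≠ 0 and m23 + m33 ≠ 0 (equivalently, since q > 0 and q ≠ 1, if and only if [m13+m33+1]·[m23+m33] ≠ 0). Such irreducible representations are the typical representations of U_q[gl(2/1)]. -/

import Mathlib

/-! If `m13 + m33 + 1 = 0`, then `V_2 ⊕ V_3` is invariant; if `m23 + m33 = 0`, then
`V_1 ⊕ V_3` is; both contain `V_3 ≠ 0` and meet `V_0` only in zero.

Conversely, `E11`, `E33` and `E21 E12` act diagonally on the basis `v(k, m11)` with simple joint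
spectrum: `E11` reads off `m11`, `E33` separates the sectors except for `V_1` and `V_2`, and
`E21 E12` (the Casimir operator of `U_q[gl(2)]` up to a function of the weight) separates these two.
Hence a nonzero invariant subspace contains a basis vector, and so a whole sector, each sector being
irreducible under `E12` and `E21`. At extreme values of `m11` the images under `E23` and `E32` have
at most one component outside the sectors already reached. In this way `E23` leads from `V_3` to
`V_1`, from `V_1` to `V_0` and from `V_2` to `V_0`, with factors `[m13 + m33 + 1]` and `[m23 + m33]`
that are nonzero in the typical case, while `E32` leads from `V_0` to all other sectors. -/

noncomputable section

/-- The `q`-number `[x] = (q^x - q^(-x))/(q - q⁻¹)`. -/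
def qn (q : ℝ) (x : ℤ) : ℝ := (q ^ x - q ^ (-x)) / (q - q⁻¹)

/-- The triple `(m12, m22, m32)` attached to the sector `k ∈ {0,1,2,3}`. -/
def trip (m13 m23 m33 : ℤ) : Fin 4 → ℤ × ℤ × ℤ
  | 0 => (m13, m23, m33)
  | 1 => (m13, m23 - 1, m33 + 1)
  | 2 => (m13 - 1, m23, m33 + 1)
  | 3 => (m13 - 1, m23 - 1, m33 + 2)

def M12 (m13 m23 m33 : ℤ) (k : Fin 4) : ℤ := (trip m13 m23 m33 k).1
def M22 (m13 m23 m33 : ℤ) (k : Fin 4) : ℤ := (trip m13 m23 m33 k).2.1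
def M32 (m13 m23 m33 : ℤ) (k : Fin 4) : ℤ := (trip m13 m23 m33 k).2.2

/-- `m11` is in the allowed range `m22 ≤ m11 ≤ m12` of the sector `k`. -/
def InR (m13 m23 m33 : ℤ) (k : Fin 4) (x : ℤ) : Prop :=
  M22 m13 m23 m33 k ≤ x ∧ x ≤ M12 m13 m23 m33 k

instance (m13 m23 m33 : ℤ) (k : Fin 4) (x : ℤ) : Decidable (InR m13 m23 m33 k x) :=
  instDecidableAnd

/-- The index set of the basis `v(k, m11)` of `W`. -/
abbrev Idx (m13 m23 m33 : ℤ) : Type :=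
  {p : Fin 4 × ℤ // InR m13 m23 m33 p.1 p.2}

/-- The module `W = W^q([m13,m23,m33])`, realized as the free complex vector
space on the basis `v(k, m11)`, `k ∈ {0,1,2,3}`, `m22 ≤ m11 ≤ m12`. -/
abbrev Wsp (m13 m23 m33 : ℤ) : Type := Idx m13 m23 m33 →₀ ℂ

/-- The basis vector `v(k, m11)` (zero if `m11` is out of range). -/
def bv (m13 m23 m33 : ℤ) (k : Fin 4) (x : ℤ) : Wsp m13 m23 m33 :=
  if h : InR m13 m23 m33 k x then Finsupp.single ⟨(k, x), h⟩ 1 else 0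

/-- The sector `V_k`, the span of the `v(k, ·)`. -/
def Vk (m13 m23 m33 : ℤ) (k : Fin 4) : Submodule ℂ (Wsp m13 m23 m33) :=
  Submodule.span ℂ (Set.range (bv m13 m23 m33 k))

/-- The Gel'fand--Zetlin realization of the induced `U_q[gl(2/1)]`-module
`W^q([m13,m23,m33])`: seven linear operators acting on the basis `v(k, m11)`
by the stated formulas (terms with `m11` out of range being `0`). -/
structure GZ (q : ℝ) (m13 m23 m33 : ℤ) where
  E11 : Wsp m13 m23 m33 →ₗ[ℂ] Wsp m13 m23 m33
  E22 : Wsp m13 m23 m33 →ₗ[ℂ] Wsp m13 m23 m33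
  E33 : Wsp m13 m23 m33 →ₗ[ℂ] Wsp m13 m23 m33
  E12 : Wsp m13 m23 m33 →ₗ[ℂ] Wsp m13 m23 m33
  E21 : Wsp m13 m23 m33 →ₗ[ℂ] Wsp m13 m23 m33
  E23 : Wsp m13 m23 m33 →ₗ[ℂ] Wsp m13 m23 m33
  E32 : Wsp m13 m23 m33 →ₗ[ℂ] Wsp m13 m23 m33
  hE11 : ∀ (k : Fin 4) (x : ℤ), InR m13 m23 m33 k x →
    E11 (bv m13 m23 m33 k x) = (x : ℂ) • bv m13 m23 m33 k x
  hE22 : ∀ (k : Fin 4) (x : ℤ), InR m13 m23 m33 k x →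
    E22 (bv m13 m23 m33 k x) =
      ((M12 m13 m23 m33 k + M22 m13 m23 m33 k - x : ℤ) : ℂ) • bv m13 m23 m33 k x
  hE33 : ∀ (k : Fin 4) (x : ℤ), InR m13 m23 m33 k x →
    E33 (bv m13 m23 m33 k x) = ((M32 m13 m23 m33 k : ℤ) : ℂ) • bv m13 m23 m33 k x
  hE12 : ∀ (k : Fin 4) (x : ℤ), InR m13 m23 m33 k x →
    E12 (bv m13 m23 m33 k x) =
      ((Real.sqrt (qn q (M12 m13 m23 m33 k - x) * qn q (x - M22 m13 m23 m33 k + 1)) : ℝ) : ℂ) •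
        bv m13 m23 m33 k (x + 1)
  hE21 : ∀ (k : Fin 4) (x : ℤ), InR m13 m23 m33 k x →
    E21 (bv m13 m23 m33 k x) =
      ((Real.sqrt (qn q (M12 m13 m23 m33 k - x + 1) * qn q (x - M22 m13 m23 m33 k)) : ℝ) : ℂ) •
        bv m13 m23 m33 k (x - 1)
  hE23₀ : ∀ x : ℤ, InR m13 m23 m33 0 x → E23 (bv m13 m23 m33 0 x) = 0
  hE23₁ : ∀ x : ℤ, InR m13 m23 m33 1 x →
    E23 (bv m13 m23 m33 1 x) =
      ((Real.sqrt (qn q (x - m23 + 1) / qn q (m13 - m23 + 1)) * qn q (m23 + m33) : ℝ) : ℂ) •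
        bv m13 m23 m33 0 x
  hE23₂ : ∀ x : ℤ, InR m13 m23 m33 2 x →
    E23 (bv m13 m23 m33 2 x) =
      ((Real.sqrt (qn q (m13 - x) / qn q (m13 - m23)) * qn q (m13 + m33 + 1) : ℝ) : ℂ) •
        bv m13 m23 m33 0 x
  hE23₃ : ∀ x : ℤ, InR m13 m23 m33 3 x →
    E23 (bv m13 m23 m33 3 x) =
      ((q⁻¹ * Real.sqrt (qn q (m13 - x) / qn q (m13 - m23 + 1)) * qn q (m13 + m33 + 1) : ℝ) : ℂ) •
          bv m13 m23 m33 1 x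
        - ((q⁻¹ * Real.sqrt (qn q (x - m23 + 1) * qn q (m13 - m23)) *
            (qn q (m23 + m33) / qn q (m13 - m23 + 1)) : ℝ) : ℂ) • bv m13 m23 m33 2 x
  hE32₀ : ∀ x : ℤ, InR m13 m23 m33 0 x →
    E32 (bv m13 m23 m33 0 x) =
      ((Real.sqrt (qn q (x - m23 + 1) / qn q (m13 - m23 + 1)) : ℝ) : ℂ) • bv m13 m23 m33 1 x
        + ((Real.sqrt (qn q (m13 - x) * qn q (m13 - m23)) / qn q (m13 - m23 + 1) : ℝ) : ℂ) •
            bv m13 m23 m33 2 x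
  hE32₁ : ∀ x : ℤ, InR m13 m23 m33 1 x →
    E32 (bv m13 m23 m33 1 x) =
      ((q * Real.sqrt (qn q (m13 - x) / qn q (m13 - m23 + 1)) : ℝ) : ℂ) • bv m13 m23 m33 3 x
  hE32₂ : ∀ x : ℤ, InR m13 m23 m33 2 x →
    E32 (bv m13 m23 m33 2 x) =
      -(((q * Real.sqrt (qn q (x - m23 + 1) / qn q (m13 - m23)) : ℝ) : ℂ) • bv m13 m23 m33 3 x)
  hE32₃ : ∀ x : ℤ, InR m13 m23 m33 3 x → E32 (bv m13 m23 m33 3 x) = 0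

/-- A subspace `U` of `W` is invariant if it is stable under all seven
operators `E11, E22, E33, E12, E21, E23, E32`. -/
def Invariant (q : ℝ) (m13 m23 m33 : ℤ) (R : GZ q m13 m23 m33)
    (U : Submodule ℂ (Wsp m13 m23 m33)) : Prop :=
  ∀ E ∈ ({R.E11, R.E22, R.E33, R.E12, R.E21, R.E23, R.E32} :
      Set (Wsp m13 m23 m33 →ₗ[ℂ] Wsp m13 m23 m33)),
    ∀ x ∈ U, E x ∈ U

section QNumbers

variable {q : ℝ}

@[simp]
theorem qn_zero : qn q 0 = 0 := by simp [qn]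

theorem qn_strictMono (hq : 0 < q) (hq1 : q ≠ 1) : StrictMono (qn q) := by
  intro x y hxy
  rcases hq1.lt_or_gt with h | h
  · have hanti := zpow_right_strictAnti₀ hq h
    exact div_lt_div_of_neg_of_lt (sub_neg.2 (h.trans ((one_lt_inv₀ hq).2 h)))
      (sub_lt_sub (hanti hxy) (hanti (neg_lt_neg hxy)))
  · have hmono := zpow_right_strictMono₀ h
    exact div_lt_div_of_pos_right (sub_lt_sub (hmono hxy) (hmono (neg_lt_neg hxy)))
      (sub_pos.2 ((inv_lt_one_of_one_lt₀ h).trans h))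

theorem qn_pos (hq : 0 < q) (hq1 : q ≠ 1) {x : ℤ} (hx : 0 < x) : 0 < qn q x :=
  qn_zero (q := q) ▸ qn_strictMono hq hq1 hx

theorem qn_nonneg (hq : 0 < q) (hq1 : q ≠ 1) {x : ℤ} (hx : 0 ≤ x) : 0 ≤ qn q x :=
  qn_zero (q := q) ▸ (qn_strictMono hq hq1).monotone hx

theorem qn_ne_zero (hq : 0 < q) (hq1 : q ≠ 1) {x : ℤ} (hx : x ≠ 0) : qn q x ≠ 0 :=
  qn_zero (q := q) ▸ (qn_strictMono hq hq1).injective.ne hx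

end QNumbers

section Diagonal

variable {ι K : Type*}

/-- The endomorphism `T` acts diagonally on the standard basis of `ι →₀ K`, with eigenvalues `t`;
such operators separate the basis vectors inside an invariant subspace. -/
def IsDiagonal [CommSemiring K] (T : Module.End K (ι →₀ K)) (t : ι → K) : Prop :=
  ∀ i, T (Finsupp.single i 1) = t i • Finsupp.single i 1

theorem IsDiagonal.apply [CommSemiring K] {T : Module.End K (ι →₀ K)} {t : ι → K}
    (hT : IsDiagonal T t) (u : ι →₀ K) (i : ι) : T u i = t i * u i := by
  classical
  induction u using Finsupp.induction_linear with
  | zero => simp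
  | add f g hf hg => simp [hf, hg, mul_add]
  | single j c =>
    rw [← Finsupp.smul_single_one, map_smul, hT]
    by_cases hji : j = i
    · simp [hji, mul_comm]
    · simp [hji]

theorem single_one_mem_of_apply_ne_zero [Field K] {U : Submodule K (ι →₀ K)} {i : ι}
    (hsep : ∀ j, j ≠ i → ∃ (T : Module.End K (ι →₀ K)) (t : ι → K),
      IsDiagonal T t ∧ (∀ u ∈ U, T u ∈ U) ∧ t j ≠ t i)
    {u : ι →₀ K} (hu : u ∈ U) (hi : u i ≠ 0) : Finsupp.single i 1 ∈ U := by
  induction hs : u.support using Finset.strongInduction generalizing u with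
  | H s ih =>
    by_cases hother : ∃ j, j ≠ i ∧ u j ≠ 0
    · obtain ⟨j, hji, hj⟩ := hother
      obtain ⟨T, t, hT, hTU, ht⟩ := hsep j hji
      -- `T u - t j • u` still has a nonzero coordinate at `i`, but no longer one at `j`.
      have hcoord (l : ι) : (T u - t j • u) l = (t l - t j) * u l := by
        simp [hT.apply, sub_mul]
      refine ih (T u - t j • u).support ?_ (sub_mem (hTU u hu) (U.smul_mem _ hu)) ?_ rfl
      · rw [← hs, Finset.ssubset_iff_of_subset]
        · exact ⟨j, by simpa using hj, by simp [hcoord]⟩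
        · intro l hl
          rw [Finsupp.mem_support_iff, hcoord] at hl
          exact Finsupp.mem_support_iff.2 (right_ne_zero_of_mul hl)
      · rw [hcoord]
        exact mul_ne_zero (sub_ne_zero.2 ht.symm) hi
    · push Not at hother
      have hsingle : u = u i • Finsupp.single i 1 := by
        ext j
        by_cases hji : j = i
        · simp [hji]
        · simp [hother j hji, Ne.symm hji]
      rwa [hsingle, U.smul_mem_iff hi] at hu

end Diagonal

section Sectors

variable {m13 m23 m33 : ℤ} {k l : Fin 4} {x : ℤ}

theorem inR_zero : InR m13 m23 m33 0 x ↔ m23 ≤ x ∧ x ≤ m13 := Iff.rfl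

theorem inR_one : InR m13 m23 m33 1 x ↔ m23 - 1 ≤ x ∧ x ≤ m13 := Iff.rfl

theorem inR_two : InR m13 m23 m33 2 x ↔ m23 ≤ x ∧ x ≤ m13 - 1 := Iff.rfl

theorem inR_three : InR m13 m23 m33 3 x ↔ m23 - 1 ≤ x ∧ x ≤ m13 - 1 := Iff.rfl

theorem M32_eq_iff : M32 m13 m23 m33 k = M32 m13 m23 m33 l ↔
    k = l ∨ k = 1 ∧ l = 2 ∨ k = 2 ∧ l = 1 := by
  fin_cases k <;> fin_cases l <;> simp [M32, trip]

theorem bv_of_inR (h : InR m13 m23 m33 k x) :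
    bv m13 m23 m33 k x = Finsupp.single ⟨(k, x), h⟩ 1 :=
  dif_pos h

theorem bv_of_not_inR (h : ¬ InR m13 m23 m33 k x) : bv m13 m23 m33 k x = 0 :=
  dif_neg h

theorem bv_mem_Vk (k : Fin 4) (x : ℤ) : bv m13 m23 m33 k x ∈ Vk m13 m23 m33 k :=
  Submodule.subset_span ⟨x, rfl⟩

theorem Vk_le_iff {U : Submodule ℂ (Wsp m13 m23 m33)} :
    Vk m13 m23 m33 k ≤ U ↔ ∀ x, InR m13 m23 m33 k x → bv m13 m23 m33 k x ∈ U := by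
  rw [Vk, Submodule.span_le, Set.range_subset_iff]
  refine ⟨fun h x _ => h x, fun h x => ?_⟩
  by_cases hx : InR m13 m23 m33 k x
  · exact h x hx
  · rw [bv_of_not_inR hx]
    exact zero_mem U

theorem iSup_Vk : ⨆ k, Vk m13 m23 m33 k = ⊤ := by
  rw [eq_top_iff, ← Finsupp.supported_univ, Finsupp.supported_eq_span_single, Submodule.span_le]
  rintro _ ⟨⟨⟨k, x⟩, hx⟩, -, rfl⟩
  refine Submodule.mem_iSup_of_mem k ?_
  simpa only [bv_of_inR hx] using bv_mem_Vk (m13 := m13) (m23 := m23) (m33 := m33) k x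

theorem Vk_le_ker_lapply {i : Idx m13 m23 m33} (hk : k ≠ i.1.1) :
    Vk m13 m23 m33 k ≤ LinearMap.ker (Finsupp.lapply i : Wsp m13 m23 m33 →ₗ[ℂ] ℂ) := by
  refine Vk_le_iff.2 fun x hx => ?_
  have hne : (⟨(k, x), hx⟩ : Idx m13 m23 m33) ≠ i := fun h => hk (h ▸ rfl)
  simp [bv_of_inR hx, hne]

theorem biSup_Vk_ne_top {K : Set (Fin 4)} (hk : k ∉ K) (hx : InR m13 m23 m33 k x) :
    ⨆ l ∈ K, Vk m13 m23 m33 l ≠ ⊤ := by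
  intro htop
  let i : Idx m13 m23 m33 := ⟨(k, x), hx⟩
  have hker : ⨆ l ∈ K, Vk m13 m23 m33 l ≤ LinearMap.ker (Finsupp.lapply i) :=
    iSup₂_le fun l hl => Vk_le_ker_lapply (ne_of_mem_of_not_mem hl hk)
  have hmem : Finsupp.single i (1 : ℂ) ∈ LinearMap.ker (Finsupp.lapply i) :=
    hker (htop ▸ Submodule.mem_top)
  simp at hmem

theorem bv_mem_biSup_Vk {K : Set (Fin 4)} (hk : k ∈ K) (x : ℤ) :
    bv m13 m23 m33 k x ∈ ⨆ l ∈ K, Vk m13 m23 m33 l :=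
  le_iSup₂ (f := fun l (_ : l ∈ K) => Vk m13 m23 m33 l) k hk (bv_mem_Vk k x)

theorem biSup_Vk_ne_bot {K : Set (Fin 4)} (hk : k ∈ K) (hx : InR m13 m23 m33 k x) :
    ⨆ l ∈ K, Vk m13 m23 m33 l ≠ ⊥ :=
  (Submodule.ne_bot_iff _).2 ⟨_, bv_mem_biSup_Vk hk x, by simp [bv_of_inR hx]⟩

theorem isDiagonal_of_bv {T : Module.End ℂ (Wsp m13 m23 m33)} {t : Fin 4 → ℤ → ℂ}
    (hT : ∀ k x, InR m13 m23 m33 k x → T (bv m13 m23 m33 k x) = t k x • bv m13 m23 m33 k x) :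
    IsDiagonal T fun i => t i.1.1 i.1.2 := by
  rintro ⟨⟨k, x⟩, hx⟩
  simpa only [bv_of_inR hx] using hT k x hx

end Sectors

namespace GZ

variable {q : ℝ} {m13 m23 m33 : ℤ} (R : GZ q m13 m23 m33)

theorem E21_E12_bv (hq : 0 < q) (hq1 : q ≠ 1) (k : Fin 4) (x : ℤ) (hx : InR m13 m23 m33 k x) :
    (R.E21 ∘ₗ R.E12) (bv m13 m23 m33 k x) =
      ((qn q (M12 m13 m23 m33 k - x) * qn q (x - M22 m13 m23 m33 k + 1) : ℝ) : ℂ) •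
        bv m13 m23 m33 k x := by
  obtain ⟨hlow, hhigh⟩ := id hx
  rw [LinearMap.comp_apply, R.hE12 k x hx, map_smul]
  rcases hhigh.eq_or_lt with rfl | hlt
  · simp
  · rw [R.hE21 k (x + 1) ⟨by lia, by lia⟩, smul_smul, add_sub_cancel_right,
      show M12 m13 m23 m33 k - (x + 1) + 1 = M12 m13 m23 m33 k - x by ring,
      show x + 1 - M22 m13 m23 m33 k = x - M22 m13 m23 m33 k + 1 by ring,
      ← Complex.ofReal_mul, Real.mul_self_sqrt]
    exact mul_nonneg (qn_nonneg hq hq1 (by lia)) (qn_nonneg hq hq1 (by lia))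

theorem E21_E12_eigenvalue_two_lt_one (hq : 0 < q) (hq1 : q ≠ 1) {x : ℤ}
    (hx : InR m13 m23 m33 2 x) :
    qn q (M12 m13 m23 m33 2 - x) * qn q (x - M22 m13 m23 m33 2 + 1) <
      qn q (M12 m13 m23 m33 1 - x) * qn q (x - M22 m13 m23 m33 1 + 1) := by
  obtain ⟨hlow, hhigh⟩ := inR_two.1 hx
  simp only [M12, M22, trip]
  exact mul_lt_mul'' (qn_strictMono hq hq1 (by lia)) (qn_strictMono hq hq1 (by lia))
    (qn_nonneg hq hq1 (by lia)) (qn_nonneg hq hq1 (by lia))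

theorem E32_bv_zero_m13 (hq : 0 < q) (hq1 : q ≠ 1) (hm : m23 ≤ m13) :
    R.E32 (bv m13 m23 m33 0 m13) = bv m13 m23 m33 1 m13 := by
  rw [R.hE32₀ m13 (inR_zero.2 ⟨hm, le_rfl⟩), div_self (qn_pos hq hq1 (by lia)).ne']
  simp

theorem E32_bv_zero_m23 (hq : 0 < q) (hq1 : q ≠ 1) (hm : m23 ≤ m13) :
    R.E32 (bv m13 m23 m33 0 m23) =
      ((√(qn q (m23 - m23 + 1) / qn q (m13 - m23 + 1)) : ℝ) : ℂ) • bv m13 m23 m33 1 m23 +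
        ((qn q (m13 - m23) / qn q (m13 - m23 + 1) : ℝ) : ℂ) • bv m13 m23 m33 2 m23 := by
  rw [R.hE32₀ m23 (inR_zero.2 ⟨le_rfl, hm⟩), Real.sqrt_mul_self (qn_nonneg hq hq1 (by lia))]

theorem E32_bv_one_m23_sub_one (hq : 0 < q) (hq1 : q ≠ 1) (hm : m23 ≤ m13) :
    R.E32 (bv m13 m23 m33 1 (m23 - 1)) = (q : ℂ) • bv m13 m23 m33 3 (m23 - 1) := by
  rw [R.hE32₁ (m23 - 1) (inR_one.2 ⟨le_rfl, by lia⟩),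
    show m13 - (m23 - 1) = m13 - m23 + 1 by ring, div_self (qn_pos hq hq1 (by lia)).ne',
    Real.sqrt_one, mul_one]

theorem E23_bv_one_m13 (hq : 0 < q) (hq1 : q ≠ 1) (hm : m23 ≤ m13) :
    R.E23 (bv m13 m23 m33 1 m13) = (qn q (m23 + m33) : ℂ) • bv m13 m23 m33 0 m13 := by
  rw [R.hE23₁ m13 (inR_one.2 ⟨by lia, le_rfl⟩), div_self (qn_pos hq hq1 (by lia)).ne',
    Real.sqrt_one, one_mul]

theorem E23_bv_two_m23 (hq : 0 < q) (hq1 : q ≠ 1) (hm : m23 < m13) :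
    R.E23 (bv m13 m23 m33 2 m23) = (qn q (m13 + m33 + 1) : ℂ) • bv m13 m23 m33 0 m23 := by
  rw [R.hE23₂ m23 (inR_two.2 ⟨le_rfl, by lia⟩), div_self (qn_pos hq hq1 (by lia)).ne',
    Real.sqrt_one, one_mul]

theorem E23_bv_three_m23_sub_one (hq : 0 < q) (hq1 : q ≠ 1) (hm : m23 ≤ m13) :
    R.E23 (bv m13 m23 m33 3 (m23 - 1)) =
      ((q⁻¹ * qn q (m13 + m33 + 1) : ℝ) : ℂ) • bv m13 m23 m33 1 (m23 - 1) := by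
  rw [R.hE23₃ (m23 - 1) (inR_three.2 ⟨le_rfl, by lia⟩),
    show m13 - (m23 - 1) = m13 - m23 + 1 by ring, div_self (qn_pos hq hq1 (by lia)).ne']
  simp

theorem invariant_biSup_Vk {K : Set (Fin 4)}
    (h23 : ∀ k ∈ K, ∀ x, InR m13 m23 m33 k x →
      R.E23 (bv m13 m23 m33 k x) ∈ ⨆ l ∈ K, Vk m13 m23 m33 l)
    (h32 : ∀ k ∈ K, ∀ x, InR m13 m23 m33 k x →
      R.E32 (bv m13 m23 m33 k x) ∈ ⨆ l ∈ K, Vk m13 m23 m33 l) :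
    Invariant q m13 m23 m33 R (⨆ l ∈ K, Vk m13 m23 m33 l) := by
  intro E hE
  suffices h : ∀ k ∈ K, ∀ x, InR m13 m23 m33 k x →
      E (bv m13 m23 m33 k x) ∈ ⨆ l ∈ K, Vk m13 m23 m33 l by
    have hle : ⨆ l ∈ K, Vk m13 m23 m33 l ≤ (⨆ l ∈ K, Vk m13 m23 m33 l).comap E :=
      iSup₂_le fun k hk => Vk_le_iff.2 (h k hk)
    exact fun _ hu => hle hu
  intro k hk x hx
  have hmem (c : ℂ) (y : ℤ) : c • bv m13 m23 m33 k y ∈ ⨆ l ∈ K, Vk m13 m23 m33 l :=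
    Submodule.smul_mem _ c (bv_mem_biSup_Vk hk y)
  rcases hE with rfl | rfl | rfl | rfl | rfl | rfl | rfl
  · exact R.hE11 k x hx ▸ hmem _ _
  · exact R.hE22 k x hx ▸ hmem _ _
  · exact R.hE33 k x hx ▸ hmem _ _
  · exact R.hE12 k x hx ▸ hmem _ _
  · exact R.hE21 k x hx ▸ hmem _ _
  · exact h23 k hk x hx
  · exact h32 k hk x hx

theorem invariant_biSup_Vk_two_three (h : m13 + m33 + 1 = 0) :
    Invariant q m13 m23 m33 R (⨆ k ∈ ({2, 3} : Set (Fin 4)), Vk m13 m23 m33 k) := by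
  have htwo (c : ℂ) (x : ℤ) :
      c • bv m13 m23 m33 2 x ∈ ⨆ k ∈ ({2, 3} : Set (Fin 4)), Vk m13 m23 m33 k :=
    Submodule.smul_mem _ c (bv_mem_biSup_Vk (by simp) x)
  have hthree (c : ℂ) (x : ℤ) :
      c • bv m13 m23 m33 3 x ∈ ⨆ k ∈ ({2, 3} : Set (Fin 4)), Vk m13 m23 m33 k :=
    Submodule.smul_mem _ c (bv_mem_biSup_Vk (by simp) x)
  refine R.invariant_biSup_Vk ?_ ?_ <;> rintro k (rfl | rfl) x hx
  · simp [R.hE23₂ x hx, h]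
  · simpa [R.hE23₃ x hx, h] using htwo _ x
  · exact R.hE32₂ x hx ▸ neg_mem (hthree _ x)
  · simp [R.hE32₃ x hx]

theorem invariant_biSup_Vk_one_three (h : m23 + m33 = 0) :
    Invariant q m13 m23 m33 R (⨆ k ∈ ({1, 3} : Set (Fin 4)), Vk m13 m23 m33 k) := by
  have hone (c : ℂ) (x : ℤ) :
      c • bv m13 m23 m33 1 x ∈ ⨆ k ∈ ({1, 3} : Set (Fin 4)), Vk m13 m23 m33 k :=
    Submodule.smul_mem _ c (bv_mem_biSup_Vk (by simp) x)
  have hthree (c : ℂ) (x : ℤ) :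
      c • bv m13 m23 m33 3 x ∈ ⨆ k ∈ ({1, 3} : Set (Fin 4)), Vk m13 m23 m33 k :=
    Submodule.smul_mem _ c (bv_mem_biSup_Vk (by simp) x)
  refine R.invariant_biSup_Vk ?_ ?_ <;> rintro k (rfl | rfl) x hx
  · simp [R.hE23₁ x hx, h]
  · simpa [R.hE23₃ x hx, h] using hone _ x
  · exact R.hE32₁ x hx ▸ hthree _ x
  · simp [R.hE32₃ x hx]

end GZ

namespace Invariant

variable {q : ℝ} {m13 m23 m33 : ℤ} {R : GZ q m13 m23 m33} {U : Submodule ℂ (Wsp m13 m23 m33)}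

theorem exists_bv_mem (hU : Invariant q m13 m23 m33 R U) (hq : 0 < q) (hq1 : q ≠ 1) (hne : U ≠ ⊥) :
    ∃ k x, InR m13 m23 m33 k x ∧ bv m13 m23 m33 k x ∈ U := by
  obtain ⟨u, hu, hu0⟩ := Submodule.exists_mem_ne_zero_of_ne_bot hne
  obtain ⟨⟨⟨k, x⟩, hx⟩, hi⟩ := Finsupp.ne_iff.1 hu0
  refine ⟨k, x, hx, bv_of_inR hx ▸ single_one_mem_of_apply_ne_zero ?_ hu hi⟩
  rintro ⟨⟨l, y⟩, hy⟩ hne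
  by_cases hyx : y = x
  · subst hyx
    by_cases hlk : M32 m13 m23 m33 l = M32 m13 m23 m33 k
    · refine ⟨R.E21 ∘ₗ R.E12, _, isDiagonal_of_bv (R.E21_E12_bv hq hq1),
        fun u hu => hU R.E21 (by simp) _ (hU R.E12 (by simp) u hu), ?_⟩
      rw [Complex.ofReal_injective.ne_iff]
      rcases M32_eq_iff.1 hlk with rfl | ⟨rfl, rfl⟩ | ⟨rfl, rfl⟩
      · exact absurd rfl hne
      · exact (GZ.E21_E12_eigenvalue_two_lt_one hq hq1 hx).ne'
      · exact (GZ.E21_E12_eigenvalue_two_lt_one hq hq1 hy).ne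
    · exact ⟨R.E33, _, isDiagonal_of_bv (t := fun k _ => (M32 m13 m23 m33 k : ℂ)) R.hE33,
        hU R.E33 (by simp), Int.cast_injective.ne hlk⟩
  · exact ⟨R.E11, _, isDiagonal_of_bv (t := fun _ x => (x : ℂ)) R.hE11, hU R.E11 (by simp),
      Int.cast_injective.ne hyx⟩

theorem bv_add_one_mem (hU : Invariant q m13 m23 m33 R U) (hq : 0 < q) (hq1 : q ≠ 1)
    {k : Fin 4} {x : ℤ} (hx : InR m13 m23 m33 k x) (hx' : InR m13 m23 m33 k (x + 1))
    (h : bv m13 m23 m33 k x ∈ U) : bv m13 m23 m33 k (x + 1) ∈ U := by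
  have hlow := hx.1
  have hhigh := hx'.2
  have hcoeff : 0 < √(qn q (M12 m13 m23 m33 k - x) * qn q (x - M22 m13 m23 m33 k + 1)) :=
    Real.sqrt_pos.2 (mul_pos (qn_pos hq hq1 (by lia)) (qn_pos hq hq1 (by lia)))
  exact (U.smul_mem_iff (Complex.ofReal_ne_zero.2 hcoeff.ne')).1
    (R.hE12 k x hx ▸ hU R.E12 (by simp) _ h)

theorem bv_sub_one_mem (hU : Invariant q m13 m23 m33 R U) (hq : 0 < q) (hq1 : q ≠ 1)
    {k : Fin 4} {x : ℤ} (hx : InR m13 m23 m33 k x) (hx' : InR m13 m23 m33 k (x - 1))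
    (h : bv m13 m23 m33 k x ∈ U) : bv m13 m23 m33 k (x - 1) ∈ U := by
  have hlow := hx'.1
  have hhigh := hx.2
  have hcoeff : 0 < √(qn q (M12 m13 m23 m33 k - x + 1) * qn q (x - M22 m13 m23 m33 k)) :=
    Real.sqrt_pos.2 (mul_pos (qn_pos hq hq1 (by lia)) (qn_pos hq hq1 (by lia)))
  exact (U.smul_mem_iff (Complex.ofReal_ne_zero.2 hcoeff.ne')).1
    (R.hE21 k x hx ▸ hU R.E21 (by simp) _ h)

theorem Vk_le_of_bv_mem (hU : Invariant q m13 m23 m33 R U) (hq : 0 < q) (hq1 : q ≠ 1)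
    {k : Fin 4} {x : ℤ} (hx : InR m13 m23 m33 k x) (h : bv m13 m23 m33 k x ∈ U) :
    Vk m13 m23 m33 k ≤ U := by
  refine Vk_le_iff.2 fun y hy => ?_
  rcases le_total x y with hxy | hyx
  · induction y, hxy using Int.leInduction with
    | base => exact h
    | succ z hxz ih =>
      have hz : InR m13 m23 m33 k z := ⟨hx.1.trans hxz, (Int.le_add_one le_rfl).trans hy.2⟩
      exact hU.bv_add_one_mem hq hq1 hz hy (ih hz)
  · induction y, hyx using Int.leInductionDown with
    | base => exact h
    | pred z hzx ih =>
      have hz : InR m13 m23 m33 k z := ⟨hy.1.trans (Int.sub_le_self z one_pos.le), hzx.trans hx.2⟩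
      exact hU.bv_sub_one_mem hq hq1 hz hy (ih hz)

theorem Vk_le_of_smul_bv_mem (hU : Invariant q m13 m23 m33 R U) (hq : 0 < q) (hq1 : q ≠ 1)
    {k : Fin 4} {x : ℤ} (hx : InR m13 m23 m33 k x) {c : ℝ} (hc : c ≠ 0)
    (h : (c : ℂ) • bv m13 m23 m33 k x ∈ U) : Vk m13 m23 m33 k ≤ U :=
  hU.Vk_le_of_bv_mem hq hq1 hx ((U.smul_mem_iff (Complex.ofReal_ne_zero.2 hc)).1 h)

theorem Vk_one_le_of_Vk_zero_le (hU : Invariant q m13 m23 m33 R U) (hq : 0 < q) (hq1 : q ≠ 1)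
    (hm : m23 ≤ m13) (h : Vk m13 m23 m33 0 ≤ U) : Vk m13 m23 m33 1 ≤ U :=
  hU.Vk_le_of_bv_mem hq hq1 (inR_one.2 ⟨by lia, le_rfl⟩)
    (R.E32_bv_zero_m13 hq hq1 hm ▸ hU R.E32 (by simp) _ (h (bv_mem_Vk 0 m13)))

theorem Vk_two_le_of_Vk_zero_le (hU : Invariant q m13 m23 m33 R U) (hq : 0 < q) (hq1 : q ≠ 1)
    (hm : m23 ≤ m13) (h : Vk m13 m23 m33 0 ≤ U) : Vk m13 m23 m33 2 ≤ U := by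
  rcases hm.eq_or_lt with heq | hlt
  · refine Vk_le_iff.2 fun x hx => ?_
    obtain ⟨hlow, hhigh⟩ := inR_two.1 hx
    lia
  · have hmem := hU R.E32 (by simp) _ (h (bv_mem_Vk 0 m23))
    have hone := hU.Vk_one_le_of_Vk_zero_le hq hq1 hm h (bv_mem_Vk 1 m23)
    rw [R.E32_bv_zero_m23 hq hq1 hm, U.add_mem_iff_right (U.smul_mem _ hone)] at hmem
    exact hU.Vk_le_of_smul_bv_mem hq hq1 (inR_two.2 ⟨le_rfl, by lia⟩)
      (div_pos (qn_pos hq hq1 (by lia)) (qn_pos hq hq1 (by lia))).ne' hmem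

theorem Vk_three_le_of_Vk_one_le (hU : Invariant q m13 m23 m33 R U) (hq : 0 < q) (hq1 : q ≠ 1)
    (hm : m23 ≤ m13) (h : Vk m13 m23 m33 1 ≤ U) : Vk m13 m23 m33 3 ≤ U :=
  hU.Vk_le_of_smul_bv_mem hq hq1 (inR_three.2 ⟨le_rfl, by lia⟩) hq.ne'
    (R.E32_bv_one_m23_sub_one hq hq1 hm ▸ hU R.E32 (by simp) _ (h (bv_mem_Vk 1 (m23 - 1))))

theorem Vk_zero_le_of_Vk_one_le (hU : Invariant q m13 m23 m33 R U) (hq : 0 < q) (hq1 : q ≠ 1)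
    (hm : m23 ≤ m13) (hb : m23 + m33 ≠ 0) (h : Vk m13 m23 m33 1 ≤ U) : Vk m13 m23 m33 0 ≤ U :=
  hU.Vk_le_of_smul_bv_mem hq hq1 (inR_zero.2 ⟨hm, le_rfl⟩) (qn_ne_zero hq hq1 hb)
    (R.E23_bv_one_m13 hq hq1 hm ▸ hU R.E23 (by simp) _ (h (bv_mem_Vk 1 m13)))

theorem Vk_zero_le_of_Vk_two_le (hU : Invariant q m13 m23 m33 R U) (hq : 0 < q) (hq1 : q ≠ 1)
    (hm : m23 < m13) (ha : m13 + m33 + 1 ≠ 0) (h : Vk m13 m23 m33 2 ≤ U) :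
    Vk m13 m23 m33 0 ≤ U :=
  hU.Vk_le_of_smul_bv_mem hq hq1 (inR_zero.2 ⟨le_rfl, hm.le⟩) (qn_ne_zero hq hq1 ha)
    (R.E23_bv_two_m23 hq hq1 hm ▸ hU R.E23 (by simp) _ (h (bv_mem_Vk 2 m23)))

theorem Vk_one_le_of_Vk_three_le (hU : Invariant q m13 m23 m33 R U) (hq : 0 < q) (hq1 : q ≠ 1)
    (hm : m23 ≤ m13) (ha : m13 + m33 + 1 ≠ 0) (h : Vk m13 m23 m33 3 ≤ U) :
    Vk m13 m23 m33 1 ≤ U :=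
  hU.Vk_le_of_smul_bv_mem hq hq1 (inR_one.2 ⟨le_rfl, by lia⟩)
    (mul_ne_zero (inv_ne_zero hq.ne') (qn_ne_zero hq hq1 ha))
    (R.E23_bv_three_m23_sub_one hq hq1 hm ▸ hU R.E23 (by simp) _ (h (bv_mem_Vk 3 (m23 - 1))))

theorem eq_top_of_Vk_zero_le (hU : Invariant q m13 m23 m33 R U) (hq : 0 < q) (hq1 : q ≠ 1)
    (hm : m23 ≤ m13) (h : Vk m13 m23 m33 0 ≤ U) : U = ⊤ := by
  have hone := hU.Vk_one_le_of_Vk_zero_le hq hq1 hm h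
  rw [eq_top_iff, ← iSup_Vk, iSup_le_iff]
  intro k
  fin_cases k
  exacts [h, hone, hU.Vk_two_le_of_Vk_zero_le hq hq1 hm h,
    hU.Vk_three_le_of_Vk_one_le hq hq1 hm hone]

theorem Vk_zero_le_of_bv_mem (hU : Invariant q m13 m23 m33 R U) (hq : 0 < q) (hq1 : q ≠ 1)
    (hm : m23 ≤ m13) (ha : m13 + m33 + 1 ≠ 0) (hb : m23 + m33 ≠ 0) {k : Fin 4} {x : ℤ}
    (hx : InR m13 m23 m33 k x) (h : bv m13 m23 m33 k x ∈ U) : Vk m13 m23 m33 0 ≤ U := by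
  have hk := hU.Vk_le_of_bv_mem hq hq1 hx h
  fin_cases k
  · exact hk
  · exact hU.Vk_zero_le_of_Vk_one_le hq hq1 hm hb hk
  · obtain ⟨hlow, hhigh⟩ := inR_two.1 hx
    exact hU.Vk_zero_le_of_Vk_two_le hq hq1 (by lia) ha hk
  · exact hU.Vk_zero_le_of_Vk_one_le hq hq1 hm hb
      (hU.Vk_one_le_of_Vk_three_le hq hq1 hm ha hk)

end Invariant

/-- The representation `W` is irreducible — the only invariant
subspaces of `W` are `{0}` and `W` — if and only if `m13 + m33 + 1 ≠ 0` and
`m23 + m33 ≠ 0` (the typicality condition for `U_q[gl(2/1)]`). -/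
theorem stmt_11 (q : ℝ) (hq : 0 < q) (hq1 : q ≠ 1)
    (m13 m23 m33 : ℤ) (hm : m23 ≤ m13) (R : GZ q m13 m23 m33) :
    (∀ U : Submodule ℂ (Wsp m13 m23 m33), Invariant q m13 m23 m33 R U →
      U = ⊥ ∨ U = ⊤) ↔ (m13 + m33 + 1 ≠ 0 ∧ m23 + m33 ≠ 0) := by
  constructor
  · intro hirr
    have hzero : InR m13 m23 m33 0 m13 := inR_zero.2 ⟨hm, le_rfl⟩
    have hthree : InR m13 m23 m33 3 (m23 - 1) := inR_three.2 ⟨le_rfl, by lia⟩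
    refine ⟨fun ha => ?_, fun hb => ?_⟩
    · rcases hirr _ (R.invariant_biSup_Vk_two_three ha) with hbot | htop
      exacts [biSup_Vk_ne_bot (by simp) hthree hbot, biSup_Vk_ne_top (by simp) hzero htop]
    · rcases hirr _ (R.invariant_biSup_Vk_one_three hb) with hbot | htop
      exacts [biSup_Vk_ne_bot (by simp) hthree hbot, biSup_Vk_ne_top (by simp) hzero htop]
  · rintro ⟨ha, hb⟩ U hU
    refine or_iff_not_imp_left.2 fun hne => ?_
    obtain ⟨k, x, hx, hmem⟩ := hU.exists_bv_mem hq hq1 hne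
    exact hU.eq_top_of_Vk_zero_le hq hq1 hm (hU.Vk_zero_le_of_bv_mem hq hq1 hm ha hb hx hmem)
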